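/- arXiv:2301.00784 — 3 statements merged into one kernel-verified Lean document; each statement's English description precedes it below -/
import Mathlib

section
/- Let m = Δ_1 + ⋯ + Δ_N be a regular multisegment with Δ_i = [a_i; b_i] and b_1 > b_2 > ⋯ > b_N, and let σ = σ_m be the associated permutation. Then for every 1 ≤ i ≤ N: (1) LC(Δ_i, m) holds if and only if σ^{−1} is strictly decreasing on X_{Δ_i,m}; (2) RC(Δ_i, m) holds if and only if σ^{−1} is strictly decreasing on X̃_{Δ_i,m}. -/
/-- A segment `[a;b]` is a pair of integers `a ≤ b`. -/
structure Segment where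
  a : ℤ
  b : ℤ
  le : a ≤ b

namespace Segment

/-- `Δ ≺ Δ'` : the segment `Δ = [a;b]` precedes `Δ' = [c;d]`,
i.e. `a < c`, `c - 1 ≤ b` and `b < d`. -/
def prec (Δ Δ' : Segment) : Prop :=
  Δ.a < Δ'.a ∧ Δ'.a - 1 ≤ Δ.b ∧ Δ.b < Δ'.b

/-- `←Δ = [a-1; b-1]`. -/
def shift (Δ : Segment) : Segment :=
  ⟨Δ.a - 1, Δ.b - 1, by have := Δ.le; omega⟩

instance (Δ Δ' : Segment) : Decidable (Δ.prec Δ') := by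
  unfold prec; infer_instance

end Segment

/-- A multisegment (given as an indexed family of segments) is regular if the beginnings
of its segments are pairwise distinct and the ends of its segments are pairwise distinct. -/
def Regular {ι : Type*} (Δ : ι → Segment) : Prop :=
  (∀ i j : ι, (Δ i).a = (Δ j).a → i = j) ∧ (∀ i j : ι, (Δ i).b = (Δ j).b → i = j)

/-- The condition `LC(Δ₀, m)` : there is an injective function
`f : X_{Δ₀,m} → Y_{Δ₀,m}` with `Δ_{f i} ≺ Δ_i` for all `i ∈ X_{Δ₀,m}`,
where `X_{Δ₀,m} = {i | Δ₀ ≺ Δ_i}` and `Y_{Δ₀,m} = {i | ←Δ₀ ≺ Δ_i}`. -/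
def LC {ι : Type*} (Δ₀ : Segment) (Δ : ι → Segment) : Prop :=
  ∃ f : ι → ι, Set.InjOn f {i | Δ₀.prec (Δ i)} ∧
    ∀ i : ι, Δ₀.prec (Δ i) → Δ₀.shift.prec (Δ (f i)) ∧ (Δ (f i)).prec (Δ i)

/-- The condition `RC(Δ₀, m)` : there is an injective function
`f : X̃_{Δ₀,m} → Ỹ_{Δ₀,m}` with `Δ_i ≺ Δ_{f i}` for all `i ∈ X̃_{Δ₀,m}`,
where `X̃_{Δ₀,m} = {i | Δ_i ≺ Δ₀}` and `Ỹ_{Δ₀,m} = {i | ←Δ_i ≺ Δ₀}`. -/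
def RC {ι : Type*} (Δ₀ : Segment) (Δ : ι → Segment) : Prop :=
  ∃ f : ι → ι, Set.InjOn f {i | (Δ i).prec Δ₀} ∧
    ∀ i : ι, (Δ i).prec Δ₀ → (Δ (f i)).shift.prec Δ₀ ∧ (Δ i).prec (Δ (f i))

/-- If an injective `f : X → X ∪ {i}` is pointwise decreasing for `b`, then any two elements of
`X` lie on a common `f`-orbit, and hence are comparable; conversely, on a chain one can take `f`
to be the predecessor map. -/
theorem exists_injOn_lt_iff_chain {ι : Type*} [Finite ι] (a b : ι → ℤ) (X : Set ι) (i : ι)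
    (hi : ∀ x ∈ X, a i < a x ∧ b i < b x) :
    (∃ f : ι → ι, Set.InjOn f X ∧
      ∀ j ∈ X, f j ∈ insert i X ∧ a (f j) < a j ∧ b (f j) < b j) ↔
    ∀ x ∈ X, ∀ y ∈ X, x ≠ y → (a x < a y ∧ b x < b y) ∨ (a y < a x ∧ b y < b x) := by
  constructor
  · rintro ⟨f, hinj, hf⟩
    have reach : ∀ (k : ℕ) (x : ι), x ∈ insert i X → b x - b i ≤ k →
        ∃ n, f^[n] x = i ∧ ∀ m < n, f^[m] x ∈ X := by
      intro k
      induction k with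
      | zero =>
        rintro x (rfl | hx) hk
        · exact ⟨0, rfl, by simp⟩
        · have := (hi x hx).2
          simp at hk
          omega
      | succ k ih =>
        rintro x (rfl | hx) hk
        · exact ⟨0, rfl, by simp⟩
        · obtain ⟨hm, -, hlt⟩ := hf x hx
          obtain ⟨n, hn, hmem⟩ := ih (f x) hm (by push_cast at hk; omega)
          refine ⟨n + 1, hn, fun m hmn => ?_⟩
          cases m with
          | zero => exact hx
          | succ m => exact hmem m (by omega)
    have merge : ∀ (n k : ℕ) (x y : ι), f^[n] x = i → f^[n + k] y = i →
        (∀ m < n, f^[m] x ∈ X) → (∀ m < n + k, f^[m] y ∈ X) → x = f^[k] y := by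
      intro n
      induction n with
      | zero =>
        intro k x y hx hy _ _
        rw [Nat.zero_add] at hy
        rw [hy]
        exact hx
      | succ n ih =>
        intro k x y hx hy hxm hym
        have h := ih k (f x) (f y) hx (by rw [Nat.add_right_comm] at hy; exact hy)
          (fun m hm => hxm (m + 1) (by omega)) (fun m hm => hym (m + 1) (by omega))
        rw [← Function.iterate_succ_apply, Function.iterate_succ_apply'] at h
        exact hinj (hxm 0 (by omega)) (hym k (by omega)) h
    have desc : ∀ (k : ℕ) (y : ι), (∀ m < k + 1, f^[m] y ∈ X) →
        a (f^[k + 1] y) < a y ∧ b (f^[k + 1] y) < b y := by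
      intro k
      induction k with
      | zero => exact fun y hy => (hf y (hy 0 (by omega))).2
      | succ k ih =>
        intro y hy
        have h1 := ih (f y) (fun m hm => hy (m + 1) (by omega))
        have h2 := (hf y (hy 0 (by omega))).2
        rw [Function.iterate_succ_apply f (k + 1) y]
        exact ⟨h1.1.trans h2.1, h1.2.trans h2.2⟩
    have comparable : ∀ (n k : ℕ) (x y : ι), x ≠ y → f^[n] x = i → f^[n + k] y = i →
        (∀ m < n, f^[m] x ∈ X) → (∀ m < n + k, f^[m] y ∈ X) → a x < a y ∧ b x < b y := by
      intro n k x y hne hx hy hxm hym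
      have h := merge n k x y hx hy hxm hym
      cases k with
      | zero => exact absurd h hne
      | succ k =>
        rw [h]
        exact desc k y (fun m hm => hym m (by omega))
    intro x hx y hy hne
    obtain ⟨n, hn, hnm⟩ := reach (b x - b i).toNat x (Or.inr hx) (by omega)
    obtain ⟨m, hm, hmm⟩ := reach (b y - b i).toNat y (Or.inr hy) (by omega)
    rcases le_total n m with h | h
    · obtain ⟨k, rfl⟩ := Nat.exists_eq_add_of_le h
      exact Or.inl (comparable n k x y hne hn hm hnm hmm)
    · obtain ⟨k, rfl⟩ := Nat.exists_eq_add_of_le h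
      exact Or.inr (comparable m k y x hne.symm hm hn hmm hnm)
  · intro hchain
    have hmax : ∀ j : ι, ∃ p : ι, j ∈ X →
        (p ∈ insert i X ∧ a p < a j ∧ b p < b j) ∧
        ∀ x ∈ X, a x < a j → b x < b j → b x ≤ b p := by
      intro j
      by_cases hj : j ∈ X
      · obtain ⟨p, hp, hpm⟩ := Set.exists_max_image
          {x | x ∈ insert i X ∧ a x < a j ∧ b x < b j} b (Set.toFinite _)
          ⟨i, Or.inl rfl, hi j hj⟩
        exact ⟨p, fun _ => ⟨hp, fun x hx h1 h2 => hpm x ⟨Or.inr hx, h1, h2⟩⟩⟩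
      · exact ⟨i, fun h => absurd h hj⟩
    choose f hf using hmax
    refine ⟨f, ?_, fun j hj => (hf j hj).1⟩
    intro x hx y hy hxy
    by_contra hne
    have hx' := hf x hx
    have hy' := hf y hy
    rw [hxy] at hx'
    rcases hchain x hx y hy hne with ⟨h1, h2⟩ | ⟨h1, h2⟩
    · have := hy'.2 x hx h1 h2
      omega
    · have := hx'.2 y hy h1 h2
      omega

section Regular

variable {ι : Type*} [Finite ι] {Δ : ι → Segment}

theorem LC_iff_chain (hreg : Regular Δ) (i : ι) :
    LC (Δ i) Δ ↔ ∀ x, (Δ i).prec (Δ x) → ∀ y, (Δ i).prec (Δ y) → x ≠ y →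
      ((Δ x).a < (Δ y).a ∧ (Δ x).b < (Δ y).b) ∨ ((Δ y).a < (Δ x).a ∧ (Δ y).b < (Δ x).b) := by
  refine Iff.trans ?_ (exists_injOn_lt_iff_chain (fun j => (Δ j).a) (fun j => (Δ j).b)
    {j | (Δ i).prec (Δ j)} i fun x hx => ⟨hx.1, hx.2.2⟩)
  refine exists_congr fun f => and_congr_right fun _ => forall_congr' fun j => ?_
  refine imp_congr_right fun hj => ?_
  simp only [Set.mem_insert_iff, Set.mem_ofPred_eq]
  constructor
  · rintro ⟨h1, h2⟩
    refine ⟨or_iff_not_imp_left.2 fun hne => ?_, h2.1, h2.2.2⟩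
    have ha := mt (hreg.1 (f j) i) hne
    have hb := mt (hreg.2 (f j) i) hne
    simp only [Segment.prec, Segment.shift] at *
    omega
  · rintro ⟨h1, h2, h3⟩
    have hle := (Δ i).le
    rcases h1 with h1 | h1
    · rw [h1] at h2 h3 ⊢
      simp only [Segment.prec, Segment.shift] at *
      omega
    · simp only [Segment.prec, Segment.shift] at *
      omega

theorem RC_iff_chain (hreg : Regular Δ) (i : ι) :
    RC (Δ i) Δ ↔ ∀ x, (Δ x).prec (Δ i) → ∀ y, (Δ y).prec (Δ i) → x ≠ y →
      ((Δ x).a < (Δ y).a ∧ (Δ x).b < (Δ y).b) ∨ ((Δ y).a < (Δ x).a ∧ (Δ y).b < (Δ x).b) := by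
  have key := exists_injOn_lt_iff_chain (fun j => -(Δ j).a) (fun j => -(Δ j).b)
    {j | (Δ j).prec (Δ i)} i fun x hx => ⟨neg_lt_neg hx.1, neg_lt_neg hx.2.2⟩
  simp only [neg_lt_neg_iff] at key
  refine Iff.trans (Iff.trans ?_ key) ?_
  · refine exists_congr fun f => and_congr_right fun _ => forall_congr' fun j => ?_
    refine imp_congr_right fun hj => ?_
    simp only [Set.mem_insert_iff, Set.mem_ofPred_eq]
    constructor
    · rintro ⟨h1, h2⟩
      refine ⟨or_iff_not_imp_left.2 fun hne => ?_, h2.1, h2.2.2⟩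
      have ha := mt (hreg.1 (f j) i) hne
      have hb := mt (hreg.2 (f j) i) hne
      simp only [Segment.prec, Segment.shift] at *
      omega
    · rintro ⟨h1, h2, h3⟩
      have hle := (Δ i).le
      rcases h1 with h1 | h1
      · rw [h1] at h2 h3 ⊢
        simp only [Segment.prec, Segment.shift] at *
        omega
      · simp only [Segment.prec, Segment.shift] at *
        omega
  · exact forall₂_congr fun x _ => forall₂_congr fun y _ => imp_congr_right fun _ => or_comm

end Regular

theorem strictAntiOn_perm_inv_iff_chain {N : ℕ} {Δ : Fin N → Segment}
    (hb : ∀ i j : Fin N, i < j → (Δ j).b < (Δ i).b) {σ : Equiv.Perm (Fin N)}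
    (hσ : ∀ i j : Fin N, i < j → (Δ (σ i)).a < (Δ (σ j)).a) (X : Set (Fin N)) :
    StrictAntiOn (fun j => σ⁻¹ j) X ↔ ∀ x ∈ X, ∀ y ∈ X, x ≠ y →
      ((Δ x).a < (Δ y).a ∧ (Δ x).b < (Δ y).b) ∨ ((Δ y).a < (Δ x).a ∧ (Δ y).b < (Δ x).b) := by
  have ha : ∀ x y, σ⁻¹ x < σ⁻¹ y → (Δ x).a < (Δ y).a := fun x y h => by
    simpa using hσ _ _ h
  constructor
  · intro h x hx y hy hne
    rcases lt_or_gt_of_ne hne with hlt | hlt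
    · exact Or.inr ⟨ha _ _ (h hx hy hlt), hb _ _ hlt⟩
    · exact Or.inl ⟨ha _ _ (h hy hx hlt), hb _ _ hlt⟩
  · intro h x hx y hy hlt
    have hby := hb _ _ hlt
    have hay : (Δ y).a < (Δ x).a := by
      rcases h x hx y hy hlt.ne with h | h
      · exact absurd h.2 hby.not_gt
      · exact h.1
    rcases lt_trichotomy (σ⁻¹ y) (σ⁻¹ x) with h' | h' | h'
    · exact h'
    · exact absurd (σ⁻¹.injective h') hlt.ne'
    · exact absurd (ha _ _ h') hay.not_gt

/-- Lemma 3.3 (lemLCRCdecr): for an ordered regular multisegment `m = Δ_1 + ⋯ + Δ_N`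
(with `b_1 > ⋯ > b_N`) with associated permutation `σ` (i.e. `a_{σ(1)} < ⋯ < a_{σ(N)}`),
and for every `i` : `LC(Δ_i, m)` holds iff `σ⁻¹` is strictly decreasing on `X_{Δ_i,m}`,
and `RC(Δ_i, m)` holds iff `σ⁻¹` is strictly decreasing on `X̃_{Δ_i,m}`. -/
theorem statement2 {N : ℕ} (Δ : Fin N → Segment) (hreg : Regular Δ)
    (hb : ∀ i j : Fin N, i < j → (Δ j).b < (Δ i).b)
    (σ : Equiv.Perm (Fin N))
    (hσ : ∀ i j : Fin N, i < j → (Δ (σ i)).a < (Δ (σ j)).a)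
    (i : Fin N) :
    (LC (Δ i) Δ ↔ StrictAntiOn (fun j => σ⁻¹ j) {j | (Δ i).prec (Δ j)}) ∧
    (RC (Δ i) Δ ↔ StrictAntiOn (fun j => σ⁻¹ j) {j | (Δ j).prec (Δ i)}) := by
  exact ⟨(LC_iff_chain hreg i).trans (strictAntiOn_perm_inv_iff_chain hb hσ _).symm,
    (RC_iff_chain hreg i).trans (strictAntiOn_perm_inv_iff_chain hb hσ _).symm⟩
end

section
/- (Lewis Carroll / Desnanot–Jacobi identity) Let R be a commutative ring and M a square N×N matrix with entries in R. For all 1 ≤ a < a' ≤ N and 1 ≤ b < b' ≤ N, det(M) · det(M_{a,a'}^{b,b'}) = det(M_{a}^{b}) · det(M_{a'}^{b'}) − det(M_{a}^{b'}) · det(M_{a'}^{b}). -/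
namespace Matrix

/-- A `2 × 2` minor of the adjugate is the determinant times an entry of the adjugate of the
matrix with one row replaced by a standard basis vector. -/
theorem adjugate_mul_adjugate_eq_det_mul_add {R ι : Type*} [CommRing R] [Fintype ι]
    [DecidableEq ι] (M : Matrix ι ι R) {a a' : ι} (h : a ≠ a') (b b' : ι) :
    M.adjugate b a * M.adjugate b' a' =
      M.det * (M.updateRow a (Pi.single b 1)).adjugate b' a' +
        M.adjugate b' a * M.adjugate b a' := by
  have hprod : M.updateRow a (Pi.single b 1) * M.adjugate =
      (M.det • (1 : Matrix ι ι R)).updateRow a (M.adjugate b) := by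
    rw [updateRow_mul, mul_adjugate, single_one_vecMul]
    rfl
  have key : (M.updateRow a (Pi.single b 1)).adjugate *
      (M.updateRow a (Pi.single b 1) * M.adjugate) = M.adjugate b a • M.adjugate := by
    rw [← Matrix.mul_assoc, adjugate_mul, Matrix.smul_mul, Matrix.one_mul, adjugate_apply M b a]
  have hentry := congrFun (congrFun key b') a'
  rw [hprod, mul_apply, Fintype.sum_eq_add a a' h] at hentry
  · rw [updateRow_self, updateRow_ne h.symm, adjugate_apply _ b' a, updateRow_idem,
      ← adjugate_apply] at hentry
    simp only [smul_apply, one_apply_eq, smul_eq_mul, mul_one] at hentry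
    rw [← hentry]
    ring
  · rintro k ⟨hka, hka'⟩
    rw [updateRow_ne hka, smul_apply, one_apply_ne hka', smul_zero, mul_zero]

/-- Deleting another row and column from a matrix one of whose rows is a standard basis vector. -/
theorem submatrix_succAbove_updateRow_single {R : Type*} [CommRing R] {n : ℕ}
    (M : Matrix (Fin (n + 1)) (Fin (n + 1)) R) (a' b' : Fin (n + 1)) (i j : Fin n) :
    (M.updateRow (a'.succAbove i) (Pi.single (b'.succAbove j) 1)).submatrix
        a'.succAbove b'.succAbove =
      (M.submatrix a'.succAbove b'.succAbove).updateRow i (Pi.single j 1) := by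
  ext k l
  simp [updateRow_apply, Pi.single_apply]

end Matrix

/-- The Lewis Carroll (Desnanot–Jacobi) identity: for a square matrix `M` over a
commutative ring and row indices `a < a'`, column indices `b < b'`,
`det(M) · det(M_{a,a'}^{b,b'}) = det(M_a^b) · det(M_{a'}^{b'}) − det(M_a^{b'}) · det(M_{a'}^b)`,
where sub/superscripts denote deleted rows/columns (deletions are realized by composing
with the order-preserving maps `Fin.succAbove` skipping the deleted indices). -/
theorem statement9 {R : Type*} [CommRing R] {n : ℕ}
    (M : Matrix (Fin (n + 2)) (Fin (n + 2)) R)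
    (a a' b b' : Fin (n + 2)) (haa : a < a') (hbb : b < b') :
    M.det *
      (M.submatrix
        (fun j => a'.succAbove
          ((a.castLT (by have := Fin.lt_def.mp haa; have := a'.isLt; omega :
              (a : ℕ) < n + 1)).succAbove j))
        (fun j => b'.succAbove
          ((b.castLT (by have := Fin.lt_def.mp hbb; have := b'.isLt; omega :
              (b : ℕ) < n + 1)).succAbove j))).det =
    (M.submatrix a.succAbove b.succAbove).det *
        (M.submatrix a'.succAbove b'.succAbove).det -
      (M.submatrix a.succAbove b'.succAbove).det *
        (M.submatrix a'.succAbove b.succAbove).det := by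
  generalize_proofs ha hb
  have hi : a'.succAbove (a.castLT ha) = a := by
    rw [Fin.succAbove_of_castSucc_lt _ _ (by simpa using haa), Fin.castSucc_castLT]
  have hj : b'.succAbove (b.castLT hb) = b := by
    rw [Fin.succAbove_of_castSucc_lt _ _ (by simpa using hbb), Fin.castSucc_castLT]
  have hminor : (M.updateRow a (Pi.single b 1)).adjugate b' a' =
      (-1) ^ (a' + b' : ℕ) * ((-1) ^ (a + b : ℕ) *
        (M.submatrix (fun j => a'.succAbove ((a.castLT ha).succAbove j))
          (fun j => b'.succAbove ((b.castLT hb).succAbove j))).det) := by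
    have hsub := Matrix.submatrix_succAbove_updateRow_single M a' b' (a.castLT ha) (b.castLT hb)
    rw [hi, hj] at hsub
    rw [Matrix.adjugate_fin_succ_eq_det_submatrix, hsub, ← Matrix.adjugate_apply,
      Matrix.adjugate_fin_succ_eq_det_submatrix, Matrix.submatrix_submatrix]
    rfl
  have key := Matrix.adjugate_mul_adjugate_eq_det_mul_add M haa.ne b b'
  simp only [hminor, Matrix.adjugate_fin_succ_eq_det_submatrix] at key
  have hsign : ((-1 : R) ^ (a + b + a' + b' : ℕ)) * (-1) ^ (a + b + a' + b' : ℕ) = 1 := by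
    rw [← mul_pow]
    simp
  simp only [pow_add] at key hsign
  linear_combination (-((-1) ^ (a : ℕ) * (-1) ^ (b : ℕ) * (-1) ^ (a' : ℕ) * (-1) ^ (b' : ℕ))) * key
    + ((M.submatrix a.succAbove b.succAbove).det * (M.submatrix a'.succAbove b'.succAbove).det -
      (M.submatrix a.succAbove b'.succAbove).det * (M.submatrix a'.succAbove b.succAbove).det -
      M.det * (M.submatrix (fun j => a'.succAbove ((a.castLT ha).succAbove j))
        (fun j => b'.succAbove ((b.castLT hb).succAbove j))).det) * hsign
end

section
/- Let σ ∈ S_N be a permutation avoiding the patterns 4231 and 3412, choose i ∈ {1,…,N}, and let σ̄^i ∈ S_{N−1} be the flattened permutation obtained from σ by removing (i, σ(i)). Then for every (N−1)×(N−1) matrix M over a commutative ring, det(M|_{Γ[id,σ]_i^{σ(i)}}) = det(M|_{Γ[id,σ̄^i]}), where Γ[id,σ]_i^{σ(i)} ⊆ [N−1]×[N−1] is obtained from Γ[id,σ] by deleting row i and column σ(i) and relabelling the remaining rows and columns order-preservingly. -/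
/-- `σ ∈ S_N` contains the pattern `τ ∈ S_k` : there are indices `i_1 < ⋯ < i_k` with
`σ(i_s) < σ(i_t) ↔ τ(s) < τ(t)` for all `s, t`. -/
def ContainsPattern {N k : ℕ} (σ : Equiv.Perm (Fin N)) (τ : Equiv.Perm (Fin k)) : Prop :=
  ∃ g : Fin k ↪o Fin N, ∀ s t : Fin k, σ (g s) < σ (g t) ↔ τ s < τ t

/-- `σ` avoids the pattern `τ`. -/
def Avoids {N k : ℕ} (σ : Equiv.Perm (Fin N)) (τ : Equiv.Perm (Fin k)) : Prop :=
  ¬ ContainsPattern σ τ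

/-- The pattern `4231` (in one-line notation), as a permutation of `Fin 4`. -/
def perm4231 : Equiv.Perm (Fin 4) := Equiv.swap 0 3

/-- The pattern `3412` (in one-line notation), as a permutation of `Fin 4`. -/
def perm3412 : Equiv.Perm (Fin 4) := Equiv.swap 0 2 * Equiv.swap 1 3

/-- The Bruhat order on `S_N`, characterized by:
`σ' ≤ σ` iff `#{k ≤ i : σ'(k) ≥ j} ≤ #{k ≤ i : σ(k) ≥ j}` for all `i, j`. -/
def BruhatLE {N : ℕ} (σ' σ : Equiv.Perm (Fin N)) : Prop :=
  ∀ i j : Fin N,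
    (Finset.univ.filter fun k => k ≤ i ∧ j ≤ σ' k).card ≤
      (Finset.univ.filter fun k => k ≤ i ∧ j ≤ σ k).card

instance {N : ℕ} (σ' σ : Equiv.Perm (Fin N)) : Decidable (BruhatLE σ' σ) := by
  unfold BruhatLE; infer_instance

/-- `Γ[id,σ] = {(i, σ'(i)) : σ' ≤ σ}`. -/
def Gamma {N : ℕ} (σ : Equiv.Perm (Fin N)) : Set (Fin N × Fin N) :=
  {p | ∃ σ' : Equiv.Perm (Fin N), BruhatLE σ' σ ∧ σ' p.1 = p.2}

open Classical in
/-- `M|_{Γ[id,σ]}` : the matrix whose `(i,j)` entry is `M i j` if `(i,j) ∈ Γ[id,σ]`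
and `0` otherwise. -/
noncomputable def restrictGamma {N : ℕ} {R : Type*} [CommRing R]
    (M : Matrix (Fin N) (Fin N) R) (σ : Equiv.Perm (Fin N)) :
    Matrix (Fin N) (Fin N) R :=
  Matrix.of fun i j => if (i, j) ∈ Gamma σ then M i j else 0

theorem BruhatLE.trans {N : ℕ} {ρ σ τ : Equiv.Perm (Fin N)}
    (h₁ : BruhatLE ρ σ) (h₂ : BruhatLE σ τ) : BruhatLE ρ τ :=
  fun i j => (h₁ i j).trans (h₂ i j)

theorem bruhatLE_mul_swap {N : ℕ} (σ : Equiv.Perm (Fin N)) {x y : Fin N}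
    (hxy : x < y) (h : σ y < σ x) : BruhatLE (σ * Equiv.swap x y) σ := by
  intro i j
  by_cases hy : y ≤ i
  · refine Finset.card_le_card_of_injOn (Equiv.swap x y) (fun k hk => ?_)
      (Equiv.injective _).injOn
    obtain ⟨hki, hkj⟩ := (Finset.mem_filter.mp hk).2
    refine Finset.mem_filter.mpr ⟨Finset.mem_univ _, ?_, hkj⟩
    rcases eq_or_ne k x with rfl | hkx
    · simpa using hy
    rcases eq_or_ne k y with rfl | hky
    · simpa using (hxy.trans_le hy).le
    · rwa [Equiv.swap_apply_of_ne_of_ne hkx hky]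
  · refine Finset.card_le_card fun k hk => ?_
    obtain ⟨hki, hkj⟩ := (Finset.mem_filter.mp hk).2
    refine Finset.mem_filter.mpr ⟨Finset.mem_univ _, hki, ?_⟩
    rw [Equiv.Perm.mul_apply] at hkj
    have hky : k ≠ y := fun e => hy (e ▸ hki)
    rcases eq_or_ne k x with rfl | hkx
    · rw [Equiv.swap_apply_left] at hkj
      exact hkj.trans h.le
    · rwa [Equiv.swap_apply_of_ne_of_ne hkx hky] at hkj

theorem bruhatLE_refl {N : ℕ} (σ : Equiv.Perm (Fin N)) : BruhatLE σ σ :=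
  fun _ _ => le_rfl

theorem exists_le_of_bruhatLE {N : ℕ} {ρ σ : Equiv.Perm (Fin N)} (h : BruhatLE ρ σ)
    (a : Fin N) : ∃ k, k ≤ a ∧ ρ a ≤ σ k := by
  have hpos : 0 < (Finset.univ.filter fun k => k ≤ a ∧ ρ a ≤ ρ k).card :=
    Finset.card_pos.mpr ⟨a, by simp⟩
  obtain ⟨k, hk⟩ := Finset.card_pos.mp (hpos.trans_le (h a (ρ a)))
  exact ⟨k, by simpa using hk⟩

theorem card_filter_apply {N : ℕ} (ρ : Equiv.Perm (Fin N)) (p : Fin N → Prop)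
    [DecidablePred p] :
    (Finset.univ.filter fun k => p (ρ k)).card = (Finset.univ.filter p).card := by
  rw [← Finset.card_map ρ.toEmbedding]
  congr 1
  ext y
  simp only [Finset.mem_map, Finset.mem_filter, Finset.mem_univ, true_and]
  exact ⟨fun ⟨x, hx, e⟩ => e ▸ hx, fun hy => ⟨ρ.symm y, by simpa using hy, by simp⟩⟩

theorem exists_ge_of_bruhatLE {N : ℕ} {ρ σ : Equiv.Perm (Fin N)} (h : BruhatLE ρ σ)
    (a : Fin N) : ∃ l, a ≤ l ∧ σ l ≤ ρ a := by
  by_contra! hc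
  have hcol : (ρ a : ℕ) + 1 < N := by
    have := hc a le_rfl
    have := (σ a).isLt
    omega
  have hrow : 0 < (a : ℕ) := by
    have hlt : σ.symm (ρ a) < a := by
      by_contra! hle
      simpa using hc _ hle
    omega
  have hle := h ⟨a - 1, by omega⟩ ⟨ρ a + 1, hcol⟩
  have key : ∀ f : Equiv.Perm (Fin N),
      (Finset.univ.filter fun k => k ≤ (⟨a - 1, by omega⟩ : Fin N) ∧
        (⟨ρ a + 1, hcol⟩ : Fin N) ≤ f k).card +
      (Finset.univ.filter fun k => k < a ∧ f k ≤ ρ a).card =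
      (Finset.univ.filter fun k => k < a).card := by
    intro f
    rw [← Finset.card_filter_add_card_filter_not (s := Finset.univ.filter fun k => k < a)
      (fun k => ρ a < f k), Finset.filter_filter, Finset.filter_filter]
    congr 2
    · ext k
      simp only [Finset.mem_filter, Finset.mem_univ, true_and, Fin.le_def, Fin.lt_def]
      omega
    · ext k
      simp
  have h₁ : (Finset.univ.filter fun k => k < a ∧ ρ k ≤ ρ a).card <
      (Finset.univ.filter fun k => ρ k ≤ ρ a).card := by
    refine Finset.card_lt_card (Finset.ssubset_iff_of_subset ?_ |>.mpr ⟨a, by simp, by simp⟩)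
    intro k hk
    simp only [Finset.mem_filter, Finset.mem_univ, true_and] at hk ⊢
    exact hk.2
  have h₂ : (Finset.univ.filter fun k => σ k ≤ ρ a).card ≤
      (Finset.univ.filter fun k => k < a ∧ σ k ≤ ρ a).card := by
    refine Finset.card_le_card fun k hk => ?_
    simp only [Finset.mem_filter, Finset.mem_univ, true_and] at hk ⊢
    refine ⟨?_, hk⟩
    by_contra! hle
    exact absurd (hc k hle) hk.not_gt
  have h₃ := card_filter_apply ρ (· ≤ ρ a)
  have h₄ := card_filter_apply σ (· ≤ ρ a)
  have h₅ := key ρ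
  have h₆ := key σ
  omega

/-- The region `Γ[id,σ]` consists of the positions having a point of `σ` weakly to the
north-east and a point of `σ` weakly to the south-west. -/
theorem mem_Gamma_iff {N : ℕ} (σ : Equiv.Perm (Fin N)) (a b : Fin N) :
    (a, b) ∈ Gamma σ ↔ (∃ k, k ≤ a ∧ b ≤ σ k) ∧ ∃ l, a ≤ l ∧ σ l ≤ b := by
  constructor
  · rintro ⟨ρ, hρ, e⟩
    obtain rfl : ρ a = b := e
    exact ⟨exists_le_of_bruhatLE hρ a, exists_ge_of_bruhatLE hρ a⟩
  rintro ⟨⟨k, hka, hk⟩, l, hal, hl⟩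
  obtain ⟨p, rfl⟩ := σ.surjective b
  rcases lt_trichotomy a p with hap | rfl | hpa
  · rcases lt_trichotomy (σ p) (σ a) with h | h | h
    · exact ⟨_, bruhatLE_mul_swap σ hap h, by simp⟩
    · exact absurd (σ.injective h) hap.ne'
    · have hka' : k < a := hka.lt_of_ne (by rintro rfl; exact absurd h hk.not_gt)
      have hkp : k < p := hka'.trans hap
      have hlt : σ p < σ k := hk.lt_of_ne (fun e => hkp.ne' (σ.injective e))
      refine ⟨σ * Equiv.swap k p * Equiv.swap k a,
        (bruhatLE_mul_swap _ hka' ?_).trans (bruhatLE_mul_swap σ hkp hlt), by simp⟩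
      simpa [Equiv.swap_apply_of_ne_of_ne hka'.ne' hap.ne] using h
  · exact ⟨σ, bruhatLE_refl σ, rfl⟩
  · rcases lt_trichotomy (σ a) (σ p) with h | h | h
    · exact ⟨_, bruhatLE_mul_swap σ hpa h, by simp⟩
    · exact absurd (σ.injective h) hpa.ne'
    · have hal' : a < l := hal.lt_of_ne (by rintro rfl; exact absurd h hl.not_gt)
      have hpl : p < l := hpa.trans hal'
      have hlt : σ l < σ p := hl.lt_of_ne (fun e => hpl.ne' (σ.injective e))
      refine ⟨σ * Equiv.swap p l * Equiv.swap a l,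
        (bruhatLE_mul_swap _ hal' ?_).trans (bruhatLE_mul_swap σ hpl hlt), by simp⟩
      simpa [Equiv.swap_apply_of_ne_of_ne hpa.ne' hal'.ne] using h

theorem Avoids.not_4231 {N : ℕ} {σ : Equiv.Perm (Fin N)} (h : Avoids σ perm4231)
    {a b c d : Fin N} (hab : a < b) (hbc : b < c) (hcd : c < d)
    (h₁ : σ d < σ b) (h₂ : σ b < σ c) (h₃ : σ c < σ a) : False := by
  refine h ⟨OrderEmbedding.ofStrictMono ![a, b, c, d] ?_, ?_⟩
  · rw [Fin.strictMono_iff_lt_succ]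
    intro s
    fin_cases s <;> simpa
  · have e : ⇑perm4231 = ![3, 1, 2, 0] := by decide
    intro s t
    rw [e]
    fin_cases s <;> fin_cases t <;> simp <;> order

theorem Avoids.not_3412 {N : ℕ} {σ : Equiv.Perm (Fin N)} (h : Avoids σ perm3412)
    {a b c d : Fin N} (hab : a < b) (hbc : b < c) (hcd : c < d)
    (h₁ : σ c < σ d) (h₂ : σ d < σ a) (h₃ : σ a < σ b) : False := by
  refine h ⟨OrderEmbedding.ofStrictMono ![a, b, c, d] ?_, ?_⟩
  · rw [Fin.strictMono_iff_lt_succ]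
    intro s
    fin_cases s <;> simpa
  · have e : ⇑perm3412 = ![2, 3, 0, 1] := by decide
    intro s t
    rw [e]
    fin_cases s <;> fin_cases t <;> simp <;> order

/-- Let `σ` avoid `4231` and `3412`, and let the graph of `π` lie in the region of
positions having a point of `σ` weakly north-east and one weakly south-west. If `π`
shares the point `(i, σ i)` with `σ`, then for every `a > i` with `π a < σ i`, some
further point of `σ` lies weakly to the north-east of `(a, π a)`. -/
theorem exists_ne_northEast {α β : Type*} [LinearOrder α] [LinearOrder β] [Fintype α]
    (σ π : α ≃ β)
    (h4231 : ∀ a b c d, a < b → b < c → c < d → σ d < σ b → σ b < σ c → σ c < σ a → False)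
    (h3412 : ∀ a b c d, a < b → b < c → c < d → σ c < σ d → σ d < σ a → σ a < σ b → False)
    (hsw : ∀ x, ∃ l, x ≤ l ∧ σ l ≤ π x)
    {i a : α} (hπ : π i = σ i) (hia : i < a) (hb : π a < σ i) :
    ∃ k, k ≤ a ∧ k ≠ i ∧ π a ≤ σ k := by
  classical
  by_contra! hc
  set b := π a with hbdef
  obtain ⟨p, hp⟩ := σ.surjective b
  have hσa : σ a < b := hc a le_rfl hia.ne'
  have hap : a < p := by
    by_contra! hle
    have hpi : p ≠ i := by
      rintro rfl
      exact hb.ne' hp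
    exact (hc p hle hpi).ne hp
  -- the first row below `a` where `σ` is at least `b`
  obtain ⟨x₀, hx₀, hmin⟩ := Finset.exists_min_image
    (Finset.univ.filter fun x => a < x ∧ b ≤ σ x) id ⟨p, by simp [hap, hp]⟩
  simp only [Finset.mem_filter, Finset.mem_univ, true_and, id] at hx₀ hmin
  -- the points of `σ` and `π` to the south-west of `(a, b)`
  let D : (α ≃ β) → Finset α := fun f => Finset.univ.filter fun x => a < x ∧ f x < b
  have hcover : D π ⊆ (D σ).filter (· < x₀) ∪
      ((D σ).filter (¬ · < x₀)).image (fun x => π.symm (σ x)) := by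
    intro x hx
    simp only [D, Finset.mem_filter, Finset.mem_univ, true_and, Finset.mem_union,
      Finset.mem_image] at hx ⊢
    obtain ⟨l, hxl, hl⟩ := hsw x
    have hlb : σ l < b := hl.trans_lt hx.2
    have hal : a < l := hx.1.trans_le hxl
    by_cases hlx : l < x₀
    · refine Or.inl ⟨⟨hx.1, ?_⟩, hxl.trans_lt hlx⟩
      by_contra! hbx
      exact absurd (hmin x ⟨hx.1, hbx⟩) (hxl.trans_lt hlx).not_ge
    · right
      have hx₀l : x₀ < l := lt_of_le_of_ne (not_lt.mp hlx) (by
        rintro rfl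
        exact absurd hx₀.2 hlb.not_ge)
      obtain ⟨q, hxq, hql, hbq, hqi⟩ : ∃ q, x₀ ≤ q ∧ q < l ∧ b ≤ σ q ∧ σ q < σ i := by
        rcases lt_trichotomy (σ x₀) (σ i) with h | h | h
        · exact ⟨x₀, le_rfl, hx₀l, hx₀.2, h⟩
        · exact absurd (σ.injective h) (hia.trans hx₀.1).ne'
        · refine ⟨p, hmin p ⟨hap, hp.ge⟩, ?_, hp.ge, hp ▸ hb⟩
          rcases lt_trichotomy p l with hpl | rfl | hlp
          · exact hpl
          · exact absurd hp hlb.ne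
          · exact (h3412 i x₀ l p (hia.trans hx₀.1) hx₀l hlp (hp ▸ hlb) (hp ▸ hb) h).elim
      obtain ⟨z, hz⟩ := σ.surjective (π x)
      refine ⟨z, ?_, by simp [hz]⟩
      have hzb : σ z < b := hz ▸ hx.2
      have hno : ∀ z, i < z → z < q → σ z < b → ¬ σ l < σ z := fun z hiz hzq hzb hlz =>
        h4231 i z q l hiz hzq hql hlz (hzb.trans_le hbq) hqi
      have haq : a < q := hx₀.1.trans_le hxq
      rcases hl.eq_or_lt with hEq | hlt
      · obtain rfl : l = z := σ.injective (hEq.trans hz.symm)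
        exact ⟨⟨hal, hlb⟩, hlx⟩
      rw [← hz] at hlt
      have hzi : ¬ z < i := fun hzi => by
        have hal' : σ a < σ l := lt_of_le_of_ne (not_lt.mp (hno a hia haq hσa))
          (fun e => hal.ne (σ.injective e))
        exact h3412 z i a l hzi hia hal hal' hlt (hzb.trans hb)
      have hiz : i < z := lt_of_le_of_ne (not_lt.mp hzi) (by
        rintro rfl
        exact absurd hb hzb.not_gt)
      have hqz : q ≤ z := by
        by_contra! hzq
        exact hno z hiz hzq hzb hlt
      exact ⟨⟨haq.trans_le hqz, hzb⟩, (hxq.trans hqz).not_gt⟩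
  have hD : (D π).card ≤ (D σ).card := calc
    (D π).card ≤ _ := (Finset.card_le_card hcover).trans (Finset.card_union_le _ _)
    _ ≤ _ := Nat.add_le_add_left Finset.card_image_le _
    _ = (D σ).card := Finset.card_filter_add_card_filter_not _
  have hcount : ∀ f : α ≃ β, (D f).card + (Finset.univ.filter fun x => x ≤ a).card =
      (Finset.univ.filter fun x => σ x < b).card +
        (Finset.univ.filter fun x => x ≤ a ∧ b ≤ f x).card := by
    intro f
    have h₁ : (Finset.univ.filter fun x => f x < b).card =
        (Finset.univ.filter fun x => σ x < b).card :=
      Finset.card_equiv (f.trans σ.symm) (by simp)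
    rw [← h₁, ← Finset.card_filter_add_card_filter_not
        (s := Finset.univ.filter fun x => f x < b) (fun x => a < x),
      ← Finset.card_filter_add_card_filter_not
        (s := Finset.univ.filter fun x => x ≤ a) (fun x => f x < b)]
    simp only [Finset.filter_filter, not_lt, D]
    simp only [and_comm, add_assoc]
  have : Nonempty α := ⟨a⟩
  have hσ : (Finset.univ.filter fun x => x ≤ a ∧ b ≤ σ x).card ≤ 1 := by
    refine Finset.card_le_one_iff_subset_singleton (α := α) |>.mpr ⟨i, fun x hx => ?_⟩
    simp only [Finset.mem_filter, Finset.mem_univ, true_and, Finset.mem_singleton] at hx ⊢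
    by_contra hxi
    exact absurd (hc x hx.1 hxi) hx.2.not_gt
  have hπ' : 1 < (Finset.univ.filter fun x => x ≤ a ∧ b ≤ π x).card :=
    Finset.one_lt_card.mpr ⟨i, by simp [hia.le, hπ, hb.le], a, by simp [hbdef], hia.ne⟩
  have := hcount σ
  have := hcount π
  omega

theorem exists_ne_southWest {α β : Type*} [LinearOrder α] [LinearOrder β] [Fintype α]
    (σ π : α ≃ β)
    (h4231 : ∀ a b c d, a < b → b < c → c < d → σ d < σ b → σ b < σ c → σ c < σ a → False)
    (h3412 : ∀ a b c d, a < b → b < c → c < d → σ c < σ d → σ d < σ a → σ a < σ b → False)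
    (hne : ∀ x, ∃ k, k ≤ x ∧ π x ≤ σ k)
    {i a : α} (hπ : π i = σ i) (hia : a < i) (hb : σ i < π a) :
    ∃ l, a ≤ l ∧ l ≠ i ∧ σ l ≤ π a :=
  exists_ne_northEast (α := αᵒᵈ) (β := βᵒᵈ) σ π
    (fun a b c d hab hbc hcd h₁ h₂ h₃ => h4231 d c b a hcd hbc hab h₃ h₂ h₁)
    (fun a b c d hab hbc hcd h₁ h₂ h₃ => h3412 d c b a hcd hbc hab h₃ h₂ h₁)
    hne hπ hia hb

/-- The permutation sending `i` to `j` and acting as `π` on the remaining indices. -/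
def insertPoint {n : ℕ} (i j : Fin (n + 1)) (π : Equiv.Perm (Fin n)) :
    Equiv.Perm (Fin (n + 1)) :=
  (finSuccEquiv' i).trans ((Equiv.optionCongr π).trans (finSuccEquiv' j).symm)

theorem insertPoint_self {n : ℕ} (i j : Fin (n + 1)) (π : Equiv.Perm (Fin n)) :
    insertPoint i j π i = j := by
  simp [insertPoint]

theorem insertPoint_succAbove {n : ℕ} (i j : Fin (n + 1)) (π : Equiv.Perm (Fin n))
    (k : Fin n) : insertPoint i j π (i.succAbove k) = j.succAbove (π k) := by
  simp [insertPoint]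

theorem mem_Gamma_succAbove {n : ℕ} {σ : Equiv.Perm (Fin (n + 1))} {i : Fin (n + 1)}
    {τ : Equiv.Perm (Fin n)} (hτ : ∀ k, σ (i.succAbove k) = (σ i).succAbove (τ k))
    {a b : Fin n} (h : (a, b) ∈ Gamma τ) : (i.succAbove a, (σ i).succAbove b) ∈ Gamma σ := by
  rw [mem_Gamma_iff] at h ⊢
  obtain ⟨⟨k, hk, hkb⟩, l, hl, hlb⟩ := h
  exact ⟨⟨i.succAbove k, by simpa using hk, by simpa [hτ] using hkb⟩,
    i.succAbove l, by simpa using hl, by simpa [hτ] using hlb⟩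

/-- A permutation whose graph lies in the region obtained from `Γ[id,σ]` by deleting row `i`
and column `σ i` already has its graph in `Γ[id,τ]`. -/
theorem graph_mem_Gamma_of_succAbove {n : ℕ} {σ : Equiv.Perm (Fin (n + 1))}
    (hav1 : Avoids σ perm4231) (hav2 : Avoids σ perm3412)
    {i : Fin (n + 1)} {τ : Equiv.Perm (Fin n)}
    (hτ : ∀ k, σ (i.succAbove k) = (σ i).succAbove (τ k)) {π : Equiv.Perm (Fin n)}
    (h : ∀ k, (i.succAbove k, (σ i).succAbove (π k)) ∈ Gamma σ) (k : Fin n) :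
    (k, π k) ∈ Gamma τ := by
  simp only [mem_Gamma_iff] at h ⊢
  have h4231 := fun a b c d => hav1.not_4231 (a := a) (b := b) (c := c) (d := d)
  have h3412 := fun a b c d => hav2.not_3412 (a := a) (b := b) (c := c) (d := d)
  set ρ := insertPoint i (σ i) π
  have hρi : ρ i = σ i := insertPoint_self _ _ _
  have hρ : ∀ k, ρ (i.succAbove k) = (σ i).succAbove (π k) := insertPoint_succAbove _ _ _
  have hne : ∀ x, ∃ k, k ≤ x ∧ ρ x ≤ σ k := fun x => by
    rcases Fin.eq_self_or_eq_succAbove i x with rfl | ⟨y, rfl⟩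
    · exact ⟨_, le_rfl, hρi.le⟩
    · simpa only [hρ] using (h y).1
  have hsw : ∀ x, ∃ l, x ≤ l ∧ σ l ≤ ρ x := fun x => by
    rcases Fin.eq_self_or_eq_succAbove i x with rfl | ⟨y, rfl⟩
    · exact ⟨_, le_rfl, hρi.ge⟩
    · simpa only [hρ] using (h y).2
  have hρne : ρ (i.succAbove k) ≠ σ i := by
    rw [hρ]
    exact Fin.succAbove_ne _ _
  constructor
  · obtain ⟨x, hx, hxi, hx'⟩ : ∃ x, x ≤ i.succAbove k ∧ x ≠ i ∧ ρ (i.succAbove k) ≤ σ x := by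
      obtain ⟨x, hx, hx'⟩ := hne (i.succAbove k)
      rcases eq_or_ne x i with rfl | hxi
      · exact exists_ne_northEast σ ρ h4231 h3412 hsw hρi
          (hx.lt_of_ne (Fin.succAbove_ne _ _).symm) (hx'.lt_of_ne hρne)
      · exact ⟨x, hx, hxi, hx'⟩
    obtain ⟨y, rfl⟩ := Fin.exists_succAbove_eq hxi
    exact ⟨y, by simpa using hx, by simpa [hρ, hτ] using hx'⟩
  · obtain ⟨x, hx, hxi, hx'⟩ : ∃ x, i.succAbove k ≤ x ∧ x ≠ i ∧ σ x ≤ ρ (i.succAbove k) := by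
      obtain ⟨x, hx, hx'⟩ := hsw (i.succAbove k)
      rcases eq_or_ne x i with rfl | hxi
      · exact exists_ne_southWest σ ρ h4231 h3412 hne hρi
          (hx.lt_of_ne (Fin.succAbove_ne _ _)) (hx'.lt_of_ne hρne.symm)
      · exact ⟨x, hx, hxi, hx'⟩
    obtain ⟨y, rfl⟩ := Fin.exists_succAbove_eq hxi
    exact ⟨y, by simpa using hx, by simpa [hρ, hτ] using hx'⟩

open Classical in
/-- Proposition 4.5 (after Chepuri–Sherman-Bennett): let `σ ∈ S_{n+1}` avoid the patterns
`4231` and `3412`, choose `i`, and let `τ ∈ S_n` be the flattened permutation obtained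
from `σ` by removing `(i, σ(i))` and relabelling order-preservingly (characterized by
`σ(i.succAbove k) = (σ i).succAbove (τ k)` for all `k`). Then for every `n × n` matrix
`M`, `det(M|_{Γ[id,σ]_i^{σ(i)}}) = det(M|_{Γ[id,τ]})`, where `Γ[id,σ]_i^{σ(i)}` is
obtained from `Γ[id,σ]` by deleting row `i` and column `σ(i)` and relabelling the
remaining rows and columns order-preservingly. -/
theorem statement11 {n : ℕ} {R : Type*} [CommRing R]
    (σ : Equiv.Perm (Fin (n + 1)))
    (hav1 : Avoids σ perm4231) (hav2 : Avoids σ perm3412)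
    (i : Fin (n + 1)) (τ : Equiv.Perm (Fin n))
    (hτ : ∀ k : Fin n, σ (i.succAbove k) = (σ i).succAbove (τ k))
    (M : Matrix (Fin n) (Fin n) R) :
    (Matrix.of fun k l : Fin n =>
        if (i.succAbove k, (σ i).succAbove l) ∈ Gamma σ then M k l else 0).det =
      (restrictGamma M τ).det := by
  rw [← Matrix.det_transpose, ← Matrix.det_transpose (restrictGamma M τ),
    Matrix.det_apply, Matrix.det_apply]
  refine Finset.sum_congr rfl fun π _ => ?_
  congr 1
  simp only [Matrix.transpose_apply, Matrix.of_apply, restrictGamma]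
  by_cases h : ∀ k, (i.succAbove k, (σ i).succAbove (π k)) ∈ Gamma σ
  · exact Finset.prod_congr rfl fun k _ => by
      rw [if_pos (h k), if_pos (graph_mem_Gamma_of_succAbove hav1 hav2 hτ h k)]
  · push Not at h
    obtain ⟨k, hk⟩ := h
    rw [Finset.prod_eq_zero (Finset.mem_univ k) (if_neg hk),
      Finset.prod_eq_zero (Finset.mem_univ k) (if_neg (mt (mem_Gamma_succAbove hτ) hk))]
end
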